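/- If a topological space X has a π-tree and Y = X \ F where F is a σ-compact subset of X, then Y (with the subspace topology) also has a π-tree. In particular, removing a countable set from a space with a π-tree yields a space with a π-tree. -/

import Mathlib

/-!
A π-tree on `X` amounts to a continuous bijection `c : X ≃ (ℕ → ℕ)` onto the Baire space such that
for every point `x` and neighbourhood `U` of `x` there is `n` for which, for all but finitely many
`k`, every `y` with `c y` agreeing with `c x` below `n` and taking the value `k` at `n` lies in `U`
(`HasCoding`, `hasPiTree_of_coding`, `coding_of_hasPiTree`): the leaf at a node is the preimage of
the corresponding cylinder. Since `c` is continuous, it sends σ-compact sets to σ-compact sets, so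
it is enough to recode the complement `Y` of a σ-compact set `⋃ K k` of the Baire space by a
continuous bijection `d : Y ≃ (ℕ → ℕ)` such that every fan of cylinders at a prefix of `y` is
refined by a fan of `d`-cylinders at some prefix of `d y` (`exists_recoding`).

For one compact set `K` and one cylinder `Cyl u`, choose `q ∈ Y ∩ Cyl u`. The tree `S` of all
extensions of `u` whose cylinder meets the compact set `K ∪ {q}` is finitely branching. Enumerate
it as `E 0, E 1, …` with prefixes first. The new subtree has a spine of nodes `0, 1, …`; the sons
of spine node `n` are spine node `n + 1` and the cylinders `Cyl (j :: E n)` with `j :: E n ∉ S`,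
the exits. The exits are disjoint from `K` and their traces on `Y` partition `Y ∩ Cyl u \ {q}`,
so the branch along the spine has intersection `{q}`, and spine node `n` refines the fan at `E n` (`Comb`, `exists_comb`).

Place such a comb for `K 0` at the root, a comb for `K 1` at each of its exits, and so on. A branch
of the resulting tree either finally follows a spine and determines the point `q` of that comb, or
takes infinitely many exits and determines a point avoiding every `K k` (`branch`). Every prefix of
every `y ∈ Y` equals `E n` at some spine node `n` containing `y` (`handled`), which is the required
refinement.
-/

universe u u' v

/-- A set-theoretic tree: a strict partial order on a set of nodes in which
the set of strict predecessors of every node is linearly ordered and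
well-founded (i.e. well-ordered). -/
structure STree (α : Type u) where
  nodes : Set α
  lt : α → α → Prop
  lt_mem_left : ∀ {x y}, lt x y → x ∈ nodes
  lt_mem_right : ∀ {x y}, lt x y → y ∈ nodes
  lt_irrefl : ∀ x, ¬ lt x x
  lt_trans : ∀ {x y z}, lt x y → lt y z → lt x z
  pred_linear : ∀ {x v w}, lt v x → lt w x → lt v w ∨ v = w ∨ lt w v
  pred_wf : ∀ {x : α} (A : Set α), (∀ a ∈ A, lt a x) → A.Nonempty →
      ∃ m ∈ A, ∀ a ∈ A, ¬ lt a m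

namespace STree

variable {α : Type u} {α' : Type u'} {β : Type v}

/-- The associated (non-strict) order, restricted to nodes. -/
def le (T : STree α) (x y : α) : Prop := T.lt x y ∨ (x = y ∧ x ∈ T.nodes)

def IsChain (T : STree α) (C : Set α) : Prop :=
  C ⊆ T.nodes ∧ ∀ x ∈ C, ∀ y ∈ C, T.le x y ∨ T.le y x

/-- A branch is a ⊆-maximal chain. -/
def IsBranch (T : STree α) (B : Set α) : Prop :=
  T.IsChain B ∧ ∀ C, T.IsChain C → B ⊆ C → B = C

/-- Two nodes are incomparable. -/
def Incomp (T : STree α) (x y : α) : Prop :=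
  x ∈ T.nodes ∧ y ∈ T.nodes ∧ ¬ T.le x y ∧ ¬ T.le y x

/-- `s` is a son (immediate successor) of `x`. -/
def IsSon (T : STree α) (x s : α) : Prop :=
  T.lt x s ∧ ¬ ∃ v, T.lt x v ∧ T.lt v s

def sons (T : STree α) (x : α) : Set α := {s | T.IsSon x s}

def IsMax (T : STree α) (m : α) : Prop := m ∈ T.nodes ∧ ∀ v, ¬ T.lt m v

def maxNodes (T : STree α) : Set α := {m | T.IsMax m}

def minNodes (T : STree α) : Set α := {m | m ∈ T.nodes ∧ ∀ v, ¬ T.lt v m}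

/-- `r` is the least node of `T`. -/
def IsRoot (T : STree α) (r : α) : Prop := r ∈ T.nodes ∧ ∀ x ∈ T.nodes, T.le r x

def roots (T : STree α) : Set α := {r | T.IsRoot r}

/-- The strict predecessors of a node. -/
def pred (T : STree α) (x : α) : Set α := {v | T.lt v x}

/-- `{v : v ≤ m}`. -/
def below (T : STree α) (m : α) : Set α := {v | T.le v m}

/-- `{v : v ≥ m}`. -/
def above (T : STree α) (m : α) : Set α := {v | T.le m v}

/-- Every nonempty chain has an upper bound among the nodes. -/
def BoundedChains (T : STree α) : Prop :=
  ∀ C, T.IsChain C → C.Nonempty → ∃ z ∈ T.nodes, ∀ c ∈ C, T.le c z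

/-- Height at most ω: each node has only finitely many strict predecessors. -/
def HeightLeOmega (T : STree α) : Prop := ∀ x ∈ T.nodes, (T.pred x).Finite

/-- No maximal nodes. -/
def NoMax (T : STree α) : Prop := ∀ m ∈ T.nodes, ∃ v, T.lt m v

/-- Every non-maximal node has exactly ℵ₀ sons. -/
def Aleph0Branching (T : STree α) : Prop :=
  ∀ x ∈ T.nodes, ¬ T.IsMax x → (T.sons x).Countable ∧ (T.sons x).Infinite

/-- Every non-maximal node has exactly κ sons. -/
def Branching (T : STree α) (κ : Cardinal.{u}) : Prop :=
  ∀ x ∈ T.nodes, ¬ T.IsMax x → Cardinal.mk (T.sons x) = κ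

/-- The strict order (proper initial segment) on finite sequences of naturals. -/
def listLt (x y : List ℕ) : Prop := x <+: y ∧ x ≠ y

/-- `T` is order-isomorphic to the tree `(ℕ^{<ω}, ⊂)` of all finite sequences of
naturals ordered by proper extension. -/
def IsoToSeqTree (T : STree α) : Prop :=
  ∃ f : α → List ℕ, Set.BijOn f T.nodes Set.univ ∧
    ∀ x ∈ T.nodes, ∀ y ∈ T.nodes, (T.lt x y ↔ listLt (f x) (f y))

/-! ### Foliage trees: a tree together with a leaf (a set) at each node. -/

/-- Larger nodes have smaller leaves. -/
def Nonincreasing (T : STree α) (leaf : α → Set β) : Prop :=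
  ∀ {x y}, T.le x y → leaf y ⊆ leaf x

/-- Incomparable nodes have disjoint leaves. -/
def Splittable (T : STree α) (leaf : α → Set β) : Prop :=
  ∀ {x y}, T.Incomp x y → leaf x ∩ leaf y = ∅

/-- The leaf of each non-maximal node is the disjoint union of the leaves of its sons. -/
def LocallyStrict (T : STree α) (leaf : α → Set β) : Prop :=
  ∀ x ∈ T.nodes, ¬ T.IsMax x →
    (leaf x = ⋃ s ∈ T.sons x, leaf s) ∧
    (∀ s ∈ T.sons x, ∀ s' ∈ T.sons x, s ≠ s' → leaf s ∩ leaf s' = ∅)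

/-- The union of all leaves. -/
def flesh (T : STree α) (leaf : α → Set β) : Set β := ⋃ x ∈ T.nodes, leaf x

/-- The intersection of leaves over a set of nodes. -/
def fruit (leaf : α → Set β) (A : Set α) : Set β := ⋂ x ∈ A, leaf x

/-- The union, over all branches, of the intersections of leaves along a branch. -/
def yield (T : STree α) (leaf : α → Set β) : Set β :=
  ⋃ B ∈ {B | T.IsBranch B}, fruit leaf B

/-- The intersection of leaves along any branch is a singleton. -/
def StrictBranches (T : STree α) (leaf : α → Set β) : Prop :=
  T.nodes.Nonempty ∧ ∀ B, T.IsBranch B → ∃ q, fruit leaf B = {q}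

/-- All leaves are open. -/
def OpenLeaves (T : STree α) [TopologicalSpace β] (leaf : α → Set β) : Prop :=
  ∀ x ∈ T.nodes, IsOpen (leaf x)

/-- The nodes whose leaf contains `p`. -/
def scope (T : STree α) (leaf : α → Set β) (p : β) : Set α :=
  {y | y ∈ T.nodes ∧ p ∈ leaf y}

/-- The family of unions of leaves over cofinite subsets of the sons of `z`. -/
def shoot (T : STree α) (leaf : α → Set β) (z : α) : Set (Set β) :=
  {U | ∃ C ⊆ T.sons z, (T.sons z \ C).Finite ∧ U = ⋃ s ∈ C, leaf s}

/-- `γ` π-refines `δ`: every nonempty member of `δ` contains a nonempty member of `γ`. -/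
def PiRefines (γ δ : Set (Set β)) : Prop :=
  ∀ D ∈ δ, D ≠ ∅ → ∃ G ∈ γ, G ≠ ∅ ∧ G ⊆ D

/-- The foliage tree grows into the subspace `Y`: for every `p ∈ Y` and every
neighbourhood `U` of `p` in the subspace `Y`, some `z ∈ scope(p)` has
`shoot(z)` π-refining `{U}`. -/
def GrowsInto (T : STree α) (leaf : α → Set β) [TopologicalSpace β] (Y : Set β) : Prop :=
  ∀ p ∈ Y, ∀ U : Set β, U ⊆ Y → U ∈ nhdsWithin p Y →
    ∃ z ∈ T.scope leaf p, PiRefines (T.shoot leaf z) {U}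

/-- `H` shoots into `F`. -/
def ShootsInto (H : STree α) (leafH : α → Set β) (F : STree α') (leafF : α' → Set β) : Prop :=
  ∀ p ∈ flesh H leafH, ∀ y ∈ F.scope leafF p,
    ∃ x ∈ H.scope leafH p, PiRefines (H.shoot leafH x) (F.shoot leafF y)

/-! ### Grafts and hybrids. -/

/-- The implant of a graft: its nodes other than the root and the maximal nodes. -/
def implant (G : STree α) : Set α := G.nodes \ (G.roots ∪ G.maxNodes)

/-- `G` is a graft for the tree `T`. -/
def IsGraft (T G : STree α) : Prop :=
  (∃ x ∈ G.nodes, ∃ y ∈ G.nodes, x ≠ y) ∧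
  (∃ r, G.IsRoot r) ∧
  G.roots ⊆ T.nodes ∧
  G.maxNodes ⊆ T.nodes ∧
  (∀ r ∈ G.roots, ∀ m ∈ G.maxNodes, T.lt r m) ∧
  (∀ m ∈ G.maxNodes, ∀ m' ∈ G.maxNodes, m ≠ m' → T.Incomp m m') ∧
  implant G ∩ T.nodes = ∅

/-- The explant of `T` and `G`: the strict `T`-successors of the root of `G`
not lying above any maximal node of `G`. -/
def explant (T G : STree α) : Set α :=
  {v | ∃ r ∈ G.roots, T.lt r v} \ ⋃ m ∈ G.maxNodes, T.above m

/-- A consistent family of grafts for `T`. -/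
def ConsistentGrafts (T : STree α) (γ : Set (STree α)) : Prop :=
  (∀ G ∈ γ, IsGraft T G) ∧
  (∀ D ∈ γ, ∀ E ∈ γ, D ≠ E → implant D ∩ implant E = ∅) ∧
  (∀ D ∈ γ, ∀ E ∈ γ, D ≠ E → ∀ rD ∈ D.roots, ∀ rE ∈ E.roots,
      T.Incomp rD rE ∨ (∃ m ∈ E.maxNodes, T.le m rD) ∨ (∃ m ∈ D.maxNodes, T.le m rE))

/-- The support of `T` for `γ`. -/
def supp (T : STree α) (γ : Set (STree α)) : Set α :=
  T.nodes \ ⋃ G ∈ γ, explant T G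

/-- The node set of the hybrid of `T` and `γ`. -/
def hybridNodes (T : STree α) (γ : Set (STree α)) : Set α :=
  supp T γ ∪ ⋃ G ∈ γ, implant G

/-- The union of `<_T` and the `<_G` (`G ∈ γ`), restricted to the hybrid nodes. -/
def hybridBase (T : STree α) (γ : Set (STree α)) (x y : α) : Prop :=
  x ∈ hybridNodes T γ ∧ y ∈ hybridNodes T γ ∧ (T.lt x y ∨ ∃ G ∈ γ, G.lt x y)

/-- The hybrid order: the transitive closure of `hybridBase`. -/
def hybridLt (T : STree α) (γ : Set (STree α)) (x y : α) : Prop :=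
  Relation.TransGen (hybridBase T γ) x y

/-! ### Foliage grafts and the foliage hybrid. -/

/-- `(G, leafG)` is a foliage graft for the nonincreasing foliage tree `(T, leafF)`. -/
def IsFGraft (T : STree α) (leafF : α → Set β) (G : STree α) (leafG : α → Set β) : Prop :=
  Nonincreasing G leafG ∧ IsGraft T G ∧
  (∀ r ∈ G.roots, leafG r ⊆ leafF r) ∧
  (∀ m ∈ G.maxNodes, leafG m = leafF m)

/-- The cut from `(T, leafF)` by the foliage graft `(G, leafG)`. -/
def cut (leafF : α → Set β) (G : STree α) (leafG : α → Set β) : Set β :=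
  ⋃ r ∈ G.roots, leafF r \ leafG r

/-- A consistent family of foliage grafts for `(T, leafF)`. -/
def ConsistentFGrafts (T : STree α) (leafF : α → Set β)
    (φ : Set (STree α × (α → Set β))) : Prop :=
  (∀ p ∈ φ, IsFGraft T leafF p.1 p.2) ∧
  (∀ p ∈ φ, ∀ q ∈ φ, p ≠ q → p.1 ≠ q.1) ∧
  ConsistentGrafts T (Prod.fst '' φ)

/-- The loss of `(T, leafF)` on `φ`. -/
def loss (leafF : α → Set β) (φ : Set (STree α × (α → Set β))) : Set β :=
  ⋃ p ∈ φ, cut leafF p.1 p.2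

/-! ### The Baire space and the standard foliage tree. -/

/-- The basic clopen set of the Baire space determined by a finite sequence. -/
def Scyl (x : List ℕ) : Set (ℕ → ℕ) := {p | ∀ i : Fin x.length, p i.1 = x.get i}

/-- A π-dense subset of the Baire space. -/
def PiDense (A : Set (ℕ → ℕ)) : Prop :=
  ∀ y : List ℕ, {n : ℕ | Scyl (y ++ [n]) ⊆ A}.Infinite

end STree
/-- A space has a π-tree: there is a foliage tree whose skeleton is isomorphic to
`(ℕ^{<ω}, ⊂)`, with open leaves, root leaf the whole space, locally strict,
with strict branches, growing into the space. -/
def HasPiTree (X : Type v) [TopologicalSpace X] : Prop :=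
  ∃ (ι : Type) (T : STree ι) (leaf : ι → Set X),
    STree.IsoToSeqTree T ∧ STree.OpenLeaves T leaf ∧ STree.LocallyStrict T leaf ∧
    STree.StrictBranches T leaf ∧ (∃ r, T.IsRoot r ∧ leaf r = Set.univ) ∧
    STree.GrowsInto T leaf Set.univ

namespace PiTree

open Filter Topology Set

/-! ### Prefixes and cylinders in the Baire space -/

/-- The first `n` values of `p`, most recent value first. Finite sequences are stored reversed
throughout, so that a son of `t` is `j :: t` and extension is the relation `<:+`. -/
def pre (p : ℕ → ℕ) : ℕ → List ℕ
  | 0 => []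
  | n + 1 => p n :: pre p n

@[simp] theorem pre_zero (p : ℕ → ℕ) : pre p 0 = [] := rfl
@[simp] theorem pre_succ (p : ℕ → ℕ) (n : ℕ) : pre p (n + 1) = p n :: pre p n := rfl

@[simp] theorem length_pre (p : ℕ → ℕ) (n : ℕ) : (pre p n).length = n := by
  induction n with
  | zero => rfl
  | succ n ih => simp [ih]

theorem pre_suffix (p : ℕ → ℕ) {m n : ℕ} (h : m ≤ n) : pre p m <:+ pre p n := by
  induction n, h using Nat.le_induction with
  | base => exact List.suffix_refl _
  | succ n _ ih => exact ih.trans (List.suffix_cons _ _)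

theorem pre_eq_iff {p q : ℕ → ℕ} {n : ℕ} : pre p n = pre q n ↔ ∀ i < n, p i = q i := by
  induction n with
  | zero => simp
  | succ n ih =>
    simp only [pre_succ, List.cons.injEq, ih]
    constructor
    · rintro ⟨h, h'⟩ i hi
      rcases Nat.lt_succ_iff_lt_or_eq.1 hi with hi | rfl
      exacts [h' i hi, h]
    · exact fun h => ⟨h n (by omega), fun i hi => h i (by omega)⟩

/-- The cylinder of all `p` having the (reversed) finite sequence `t` as a prefix. -/
def Cyl (t : List ℕ) : Set (ℕ → ℕ) := {p | pre p t.length = t}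

theorem mem_Cyl {t : List ℕ} {p : ℕ → ℕ} : p ∈ Cyl t ↔ pre p t.length = t := Iff.rfl

theorem mem_Cyl_cons {t : List ℕ} {j : ℕ} {p : ℕ → ℕ} :
    p ∈ Cyl (j :: t) ↔ p t.length = j ∧ p ∈ Cyl t := by
  simp [Cyl]

theorem mem_Cyl_pre {p q : ℕ → ℕ} {n : ℕ} : q ∈ Cyl (pre p n) ↔ pre q n = pre p n := by
  simp [Cyl]

theorem Cyl_suffix {s t : List ℕ} (hs : s <:+ t) : Cyl t ⊆ Cyl s := by
  intro p hp
  have h1 : pre p s.length <:+ t := by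
    have := pre_suffix p hs.length_le
    rwa [mem_Cyl.1 hp] at this
  have := List.suffix_of_suffix_length_le h1 hs (by simp)
  exact this.eq_of_length (by simp)

theorem suffix_of_mem {s t : List ℕ} {p : ℕ → ℕ} (hs : p ∈ Cyl s) (ht : p ∈ Cyl t)
    (h : s.length ≤ t.length) : s <:+ t := by
  have := pre_suffix p h
  rwa [mem_Cyl.1 hs, mem_Cyl.1 ht] at this

theorem isClopen_Cyl (t : List ℕ) : IsClopen (Cyl t) := by
  induction t with
  | nil => convert isClopen_univ; ext; simp [Cyl]
  | cons j t ih =>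
    have : Cyl (j :: t) = (fun p : ℕ → ℕ => p t.length) ⁻¹' {j} ∩ Cyl t := by
      ext p; simp [mem_Cyl_cons]
    rw [this]
    exact ((isClopen_discrete _).preimage (continuous_apply _)).inter ih

/-! ### Coding a space by a tree of partitions -/
/-- A tree of successive partitions of `Y` indexed by finite sequences, in which every infinite
branch determines exactly one point, is the pullback of the tree of cylinders along a bijection of
`Y` with the Baire space. -/
theorem exists_coding {Y : Type*} (L : List ℕ → Set Y) (h0 : L [] = univ)
    (hsplit : ∀ t y, y ∈ L t ↔ ∃ i, y ∈ L (i :: t))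
    (hdisj : ∀ t i j y, y ∈ L (i :: t) → y ∈ L (j :: t) → i = j)
    (hbr : ∀ p : ℕ → ℕ, ∃! y, ∀ n, y ∈ L (pre p n)) :
    ∃ d : Y ≃ (ℕ → ℕ), ∀ y t, y ∈ L t ↔ d y ∈ Cyl t := by
  have hex : ∀ y, ∃ p : ℕ → ℕ, ∀ n, y ∈ L (pre p n) := by
    intro y
    choose nx hnx using fun t : {t // y ∈ L t} => (hsplit t.1 y).1 t.2
    let s : ℕ → {t // y ∈ L t} := fun n =>
      Nat.rec ⟨[], h0 ▸ mem_univ y⟩ (fun _ t => ⟨nx t :: t.1, hnx t⟩) n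
    refine ⟨fun n => nx (s n), fun n => ?_⟩
    have : pre (fun n => nx (s n)) n = (s n).1 := by
      induction n with
      | zero => rfl
      | succ n ih => rw [pre_succ, ih]
    rw [this]
    exact (s n).2
  choose d hd using hex
  have key : ∀ t y, y ∈ L t → pre (d y) t.length = t := by
    intro t
    induction t with
    | nil => intro y _; rfl
    | cons i t ih =>
      intro y hy
      have h1 := ih y ((hsplit t y).2 ⟨i, hy⟩)
      have h2 := hd y (t.length + 1)
      rw [pre_succ, h1] at h2
      simp only [List.length_cons, pre_succ, h1]
      rw [hdisj _ _ _ _ h2 hy]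
  refine ⟨Equiv.ofBijective d ⟨?_, ?_⟩, fun y t => ⟨key t y, fun h => ?_⟩⟩
  · intro y y' h
    exact (hbr (d y)).unique (hd y) (h ▸ hd y')
  · intro p
    obtain ⟨y, hy, -⟩ := hbr p
    refine ⟨y, funext fun n => ?_⟩
    have := key _ _ (hy (n + 1))
    simp only [pre_succ, List.length_cons, length_pre, List.cons.injEq] at this
    exact this.1
  · have h' := hd y t.length
    rw [show pre (d y) t.length = t from h] at h'
    exact h'

theorem continuous_of_open {Y : Type*} [TopologicalSpace Y] {d : Y → (ℕ → ℕ)}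
    (h : ∀ t, IsOpen (d ⁻¹' Cyl t)) : Continuous d := by
  refine continuous_pi fun n => continuous_discrete_rng.2 fun j => ?_
  have : (fun y => d y n) ⁻¹' {j} = ⋃ p : ℕ → ℕ, d ⁻¹' Cyl (j :: pre p n) := by
    ext y
    simp only [mem_preimage, mem_singleton_iff, mem_iUnion, mem_Cyl_cons, length_pre]
    exact ⟨fun h => ⟨d y, h, by simp [mem_Cyl]⟩, fun ⟨_, h, _⟩ => h⟩
  rw [this]
  exact isOpen_iUnion fun p => h _

/-- A coordinate form of having a π-tree: a continuous bijection `c` with the Baire space such that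
every neighbourhood of `x` contains, for some `n` and all but finitely many `k`, the `c`-preimage of
the cylinder of `pre (c x) n` extended by `k`. -/
def HasCoding (X : Type*) [TopologicalSpace X] : Prop :=
  ∃ c : X ≃ (ℕ → ℕ), Continuous c ∧ ∀ x, ∀ U ∈ 𝓝 x, ∃ n, ∀ᶠ k in cofinite,
    ∀ y, pre (c y) n = pre (c x) n → c y n = k → y ∈ U

/-! ### Combs: removing one compact set from one cylinder -/
/-- A cover of `Y ∩ Cyl u` by a point `q` of it and pairwise disjoint exit cylinders
`Cyl (g n i :: E n)`, which avoid `q` and `K`. Here `E` lists nodes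
above `u` and, for each `n`, the exits with index `n` extend
`E n` by the values `g n i`. The fields `first` and `first_q` say that, beyond `u`, all prefixes of
an exit at `E n` up to `E n` itself occur among `E 0, …, E n`, and all prefixes of `q` occur in `E`. -/
structure Comb (Y K : Set (ℕ → ℕ)) (u : List ℕ) where
  q : ℕ → ℕ
  E : ℕ → List ℕ
  g : ℕ → ℕ → ℕ
  q_mem : q ∈ Y
  q_cyl : q ∈ Cyl u
  g_inj : ∀ n, Function.Injective (g n)
  sub : ∀ n, u <:+ E n
  disj : ∀ {m n i j x}, x ∈ Cyl (g m i :: E m) → x ∈ Cyl (g n j :: E n) → m = n ∧ i = j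
  q_not : ∀ n i, q ∉ Cyl (g n i :: E n)
  cover : ∀ {x}, x ∈ Y → x ∈ Cyl u → x = q ∨ ∃ n i, x ∈ Cyl (g n i :: E n)
  avoid : ∀ {n i x}, x ∈ Cyl (g n i :: E n) → x ∉ K
  closed : ∀ n, IsClosed {x | ∃ i, x ∈ Cyl (g n i :: E n)}
  first : ∀ {n i x}, x ∈ Cyl (g n i :: E n) → ∀ l, u.length ≤ l → l ≤ (E n).length →
    ∃ m ≤ n, E m = pre x l
  first_q : ∀ l, u.length ≤ l → ∃ m, E m = pre q l

/-- The standard encoding of lists is monotone for the suffix order, so it enumerates every set of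
finite sequences with prefixes first. -/
theorem encode_suffix {s t : List ℕ} (h : s <:+ t) : Encodable.encode s ≤ Encodable.encode t := by
  induction t with
  | nil => rw [List.suffix_nil.1 h]
  | cons j t ih =>
    rcases List.suffix_cons_iff.1 h with rfl | h
    · rfl
    · refine (ih h).trans ?_
      rw [Encodable.encode_list_cons]
      exact (Nat.right_le_pair _ _).trans (Nat.le_succ _)

theorem exists_enum {S : Set (List ℕ)} (hS : S.Infinite) :
    ∃ E : ℕ → List ℕ, Function.Injective E ∧ range E = S ∧ ∀ m n, E m <:+ E n → m ≤ n := by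
  let P : ℕ → Prop := fun n => Denumerable.ofNat (List ℕ) n ∈ S
  have hinf : {n | P n}.Infinite := by
    have : {n | P n} = Encodable.encode '' S := by
      ext n
      constructor
      · exact fun h => ⟨_, h, by simp⟩
      · rintro ⟨s, hs, rfl⟩
        change Denumerable.ofNat (List ℕ) _ ∈ S
        simpa using hs
    rw [this]
    exact hS.image Encodable.encode_injective.injOn
  refine ⟨fun n => Denumerable.ofNat _ (Nat.nth P n), ?_, ?_, ?_⟩
  · exact (Denumerable.eqv (List ℕ)).symm.injective.comp (Nat.nth_injective hinf)
  · ext s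
    constructor
    · rintro ⟨n, rfl⟩
      exact Nat.nth_mem_of_infinite hinf n
    · intro hs
      have : Encodable.encode s ∈ range (Nat.nth P) := by
        rw [Nat.range_nth_of_infinite hinf]
        simpa [P] using hs
      obtain ⟨n, hn⟩ := this
      exact ⟨n, by simp [hn]⟩
  · intro m n h
    have := encode_suffix h
    simp only [Denumerable.encode_ofNat] at this
    exact (Nat.nth_strictMono hinf).le_iff_le.1 this

theorem exists_cyl (u : List ℕ) : ∃ p, p ∈ Cyl u := by
  induction u with
  | nil => exact ⟨0, rfl⟩
  | cons j u ih =>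
    obtain ⟨p, hp⟩ := ih
    refine ⟨Function.update p u.length j, mem_Cyl_cons.2 ⟨by simp, ?_⟩⟩
    rw [mem_Cyl] at hp ⊢
    refine Eq.trans (pre_eq_iff.2 fun i hi => ?_) hp
    rw [Function.update_of_ne hi.ne]

/-- A σ-compact subset of the Baire space contains no cylinder: diagonalise against the coordinate
bounds of the compact pieces. -/
theorem exists_mem_compl {K : ℕ → Set (ℕ → ℕ)} (hK : ∀ n, IsCompact (K n)) (u : List ℕ) :
    ∃ q ∈ (⋃ n, K n)ᶜ, q ∈ Cyl u := by
  obtain ⟨p, hp⟩ := exists_cyl u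
  have hb : ∀ n i, ∃ b, ∀ x ∈ K n, x i < b := by
    intro n i
    obtain ⟨b, hb⟩ := ((hK n).image (continuous_apply i)).finite_of_discrete.bddAbove
    exact ⟨b + 1, fun x hx => Nat.lt_succ_of_le (hb ⟨x, hx, rfl⟩)⟩
  choose b hb using hb
  refine ⟨fun i => if i < u.length then p i else b (i - u.length) i, ?_, ?_⟩
  · simp only [mem_compl_iff, mem_iUnion, not_exists]
    intro n hn
    have := hb n (n + u.length) _ hn
    simp at this
  · rw [mem_Cyl] at hp ⊢
    refine Eq.trans (pre_eq_iff.2 fun i hi => ?_) hp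
    simp [hi]

/-- The nodes of the comb are the extensions of `u` whose cylinders meet `insert q K`; compactness
makes this tree finitely branching, so infinitely many exits leave each of its nodes. -/
theorem exists_comb {Y K : Set (ℕ → ℕ)} {u : List ℕ} {q : ℕ → ℕ} (hK : IsCompact K)
    (hKY : ∀ x ∈ Y, x ∉ K) (hq : q ∈ Y) (hqu : q ∈ Cyl u) : Nonempty (Comb Y K u) := by
  have hc : IsCompact (insert q K) := hK.insert q
  let S : Set (List ℕ) := {t | u <:+ t ∧ (insert q K ∩ Cyl t).Nonempty}
  have hqS : ∀ l, u.length ≤ l → pre q l ∈ S := fun l hl =>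
    ⟨by have := pre_suffix q hl; rwa [mem_Cyl.1 hqu] at this, q, mem_insert _ _, by simp [mem_Cyl]⟩
  have hSinf : S.Infinite := by
    refine infinite_of_injective_forall_mem (f := fun n => pre q (u.length + n)) ?_
      fun n => hqS _ (by omega)
    intro a b h
    have := congrArg List.length h
    simpa using this
  have hdown : ∀ {s t}, t ∈ S → u <:+ s → s <:+ t → s ∈ S := by
    rintro s t ⟨-, x, hx, hxt⟩ hus hst
    exact ⟨hus, x, hx, Cyl_suffix hst hxt⟩
  obtain ⟨E, hEi, hEr, hEo⟩ := exists_enum hSinf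
  have hES : ∀ n, E n ∈ S := fun n => hEr ▸ mem_range_self n
  have hfin : ∀ t, {j | j :: t ∈ S}.Finite := by
    intro t
    refine (hc.image (continuous_apply t.length)).finite_of_discrete.subset ?_
    rintro j ⟨-, x, hx, hxt⟩
    exact ⟨x, hx, (mem_Cyl_cons.1 hxt).1⟩
  have hinf : ∀ t, {j | j :: t ∉ S}.Infinite := fun t => (hfin t).infinite_compl
  have hgS : ∀ n i, Nat.nth (fun j => j :: E n ∉ S) i :: E n ∉ S := fun n i =>
    Nat.nth_mem_of_infinite (hinf (E n)) i
  have hgr : ∀ n j, j :: E n ∉ S → ∃ i, Nat.nth (fun j => j :: E n ∉ S) i = j := fun n j hj => by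
    have : j ∈ range (Nat.nth fun j => j :: E n ∉ S) := by
      rw [Nat.range_nth_of_infinite (hinf (E n))]; exact hj
    exact this
  have hxS : ∀ n i x, x ∈ Cyl (Nat.nth (fun j => j :: E n ∉ S) i :: E n) → x ∉ insert q K :=
    fun n i x hx hxK => hgS n i ⟨(hES n).1.trans (List.suffix_cons _ _), x, hxK, hx⟩
  refine ⟨{
    q := q
    E := E
    g := fun n => Nat.nth (fun j => j :: E n ∉ S)
    q_mem := hq
    q_cyl := hqu
    g_inj := fun n => Nat.nth_injective (hinf (E n))
    sub := fun n => (hES n).1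
    disj := ?_
    q_not := fun n i h => hxS n i q h (mem_insert _ _)
    cover := ?_
    avoid := fun {n i x} hx h => hxS n i x hx (mem_insert_of_mem _ h)
    closed := ?_
    first := ?_
    first_q := fun l hl => by
      have := hqS l hl
      rwa [← hEr] at this }⟩
  · have aux : ∀ {m n i j x}, x ∈ Cyl (Nat.nth (fun j => j :: E m ∉ S) i :: E m) →
        x ∈ Cyl (Nat.nth (fun j => j :: E n ∉ S) j :: E n) → (E m).length ≤ (E n).length →
        m = n ∧ i = j := by
      intro m n i j x hx hx' hl
      have hs := suffix_of_mem hx hx' (by simpa using hl)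
      rcases List.suffix_cons_iff.1 hs with h | h
      · have h2 := List.cons.inj h
        obtain rfl := hEi h2.2
        exact ⟨rfl, Nat.nth_injective (hinf (E m)) h2.1⟩
      · exact absurd (hdown (hES n) ((hES m).1.trans (List.suffix_cons _ _)) h) (hgS m i)
    intro m n i j x hx hx'
    rcases le_total (E m).length (E n).length with h | h
    · exact aux hx hx' h
    · obtain ⟨rfl, rfl⟩ := aux hx' hx h
      exact ⟨rfl, rfl⟩
  · intro x hxY hxu
    by_contra! hcon
    obtain ⟨hne, hcon⟩ := hcon
    -- All prefixes beyond `u` of a point taking no exit are in `S`, so the point lies in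
    -- the closure of `insert q K`, which is closed.
    have hall : ∀ n, pre x (u.length + n) ∈ S := by
      intro n
      induction n with
      | zero => exact ⟨by rw [Nat.add_zero, mem_Cyl.1 hxu], q, mem_insert _ _, by
          rw [Nat.add_zero, mem_Cyl.1 hxu]; exact hqu⟩
      | succ n ih =>
        by_contra h
        rw [← hEr] at ih
        obtain ⟨m, hm⟩ := ih
        rw [← add_assoc, pre_succ, ← hm] at h
        obtain ⟨i, hi⟩ := hgr m _ h
        refine hcon m i ?_
        rw [hi, mem_Cyl_cons, hm]
        simp [mem_Cyl]
    have hxc : x ∈ closure (insert q K) := by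
      rw [mem_closure_iff_nhds]
      intro V hV
      have hpi : ∃ n, Cyl (pre x n) ⊆ V := by
        rw [nhds_pi, Filter.mem_pi'] at hV
        obtain ⟨I, s, hs, hsV⟩ := hV
        refine ⟨I.sup id + 1, fun z hz => hsV fun i hi => ?_⟩
        rw [mem_Cyl_pre, pre_eq_iff] at hz
        rw [hz i (Nat.lt_succ_of_le (Finset.le_sup (f := id) hi))]
        exact mem_of_mem_nhds (hs i)
      obtain ⟨n, hn⟩ := hpi
      obtain ⟨-, z, hzK, hz⟩ := hall n
      exact ⟨z, hn (Cyl_suffix (pre_suffix x (by omega)) hz), hzK⟩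
    rw [hc.isClosed.closure_eq] at hxc
    rcases hxc with h | h
    · exact hne h
    · exact hKY x hxY h
  · intro n
    have : {x | ∃ i, x ∈ Cyl (Nat.nth (fun j => j :: E n ∉ S) i :: E n)} =
        Cyl (E n) ∩ (fun x : ℕ → ℕ => x (E n).length) ⁻¹' {j | j :: E n ∉ S} := by
      ext x
      simp only [mem_ofPred_eq, mem_Cyl_cons, mem_inter_iff, mem_preimage]
      constructor
      · rintro ⟨i, h, h'⟩
        exact ⟨h', h ▸ hgS n i⟩
      · rintro ⟨h, h'⟩
        obtain ⟨i, hi⟩ := hgr n _ h'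
        exact ⟨i, hi.symm, h⟩
    rw [this]
    exact (isClopen_Cyl _).1.inter ((isClosed_discrete _).preimage (continuous_apply _))
  · intro n i x hx l hl hl'
    have hxE := (mem_Cyl_cons.1 hx).2
    have h1 : pre x l <:+ E n := by
      have := pre_suffix x hl'
      rwa [mem_Cyl.1 hxE] at this
    have h2 : pre x l ∈ S := by
      refine hdown (hES n) ?_ h1
      have := pre_suffix x hl
      rwa [mem_Cyl.1 (Cyl_suffix (hES n).1 hxE)] at this
    rw [← hEr] at h2
    obtain ⟨m, hm⟩ := h2
    exact ⟨m, hEo _ _ (hm ▸ h1), hm⟩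

/-! ### Iterating combs along the sequence of compact sets -/
section Machine

variable {Y : Set (ℕ → ℕ)} {K : ℕ → Set (ℕ → ℕ)} (G : ∀ k u, Comb Y (K k) u)

/-- The state `(k, u, n)` is spine node `n` of the comb chosen for `K k` in `Cyl u`; its leaf is
`Cyl u` without the exits of index below `n`. The points of `⋃ n, K n` are discarded only later, by
intersecting with `Y`. -/
def Lst (s : ℕ × List ℕ × ℕ) : Set (ℕ → ℕ) :=
  {x | x ∈ Cyl s.2.1 ∧ ∀ m < s.2.2, ∀ i,
    x ∉ Cyl ((G s.1 s.2.1).g m i :: (G s.1 s.2.1).E m)}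

/-- Son `0` is the next spine node; son `i + 1` is the `i`-th exit, where a comb for the next compact
set starts. -/
def son (s : ℕ × List ℕ × ℕ) : ℕ → ℕ × List ℕ × ℕ
  | 0 => (s.1, s.2.1, s.2.2 + 1)
  | i + 1 => (s.1 + 1, (G s.1 s.2.1).g s.2.2 i :: (G s.1 s.2.1).E s.2.2, 0)

/-- The state reached from the initial state by a (reversed) finite sequence of choices. -/
def st : List ℕ → ℕ × List ℕ × ℕ
  | [] => (0, [], 0)
  | i :: t => son G (st t) i

theorem mem_Lst_zero {k u x} : x ∈ Lst G (k, u, 0) ↔ x ∈ Cyl u := by simp [Lst]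

theorem exit_not_mem {k u n i m j x}
    (hx : x ∈ Cyl ((G k u).g n i :: (G k u).E n)) (h : m < n) :
    x ∉ Cyl ((G k u).g m j :: (G k u).E m) := fun h' => by
  have := ((G k u).disj h' hx).1
  omega

theorem mem_Lst_son {s x i} (h : x ∈ Lst G (son G s i)) : x ∈ Lst G s := by
  obtain ⟨k, u, n⟩ := s
  cases i with
  | zero => exact ⟨h.1, fun m hm => h.2 m (Nat.lt_succ_of_lt hm)⟩
  | succ i =>
    have h : x ∈ Cyl ((G k u).g n i :: (G k u).E n) := (mem_Lst_zero G).1 h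
    exact ⟨Cyl_suffix (((G k u).sub n).trans (List.suffix_cons _ _)) h,
      fun m hm j => exit_not_mem G h hm⟩

theorem Lst_split {s x} (h : x ∈ Lst G s) : ∃ i, x ∈ Lst G (son G s i) := by
  obtain ⟨k, u, n⟩ := s
  by_cases hx : ∃ i, x ∈ Cyl ((G k u).g n i :: (G k u).E n)
  · obtain ⟨i, hi⟩ := hx
    exact ⟨i + 1, (mem_Lst_zero G).2 hi⟩
  · push Not at hx
    refine ⟨0, h.1, fun m hm => ?_⟩
    rcases Nat.lt_succ_iff_lt_or_eq.1 hm with hm | rfl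
    exacts [h.2 m hm, hx]

theorem Lst_disj {s x i j} (h : x ∈ Lst G (son G s i)) (h' : x ∈ Lst G (son G s j)) : i = j := by
  obtain ⟨k, u, n⟩ := s
  rcases i with - | i <;> rcases j with - | j
  · rfl
  · exact absurd ((mem_Lst_zero G).1 h') (h.2 n (Nat.lt_succ_self n) j)
  · exact absurd ((mem_Lst_zero G).1 h) (h'.2 n (Nat.lt_succ_self n) i)
  · rw [((G k u).disj ((mem_Lst_zero G).1 h) ((mem_Lst_zero G).1 h')).2]

theorem q_mem_Lst (k u n) : (G k u).q ∈ Lst G (k, u, n) :=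
  ⟨(G k u).q_cyl, fun m _ i => (G k u).q_not m i⟩

theorem isOpen_Lst (s) : IsOpen (Lst G s) := by
  obtain ⟨k, u, n⟩ := s
  induction n with
  | zero =>
    convert (isClopen_Cyl u).2
    ext x; exact mem_Lst_zero G
  | succ n ih =>
    have : Lst G (k, u, n + 1) =
        Lst G (k, u, n) ∩ {x | ∃ i, x ∈ Cyl ((G k u).g n i :: (G k u).E n)}ᶜ := by
      ext x
      constructor
      · exact fun h => ⟨mem_Lst_son G (i := 0) h, fun ⟨i, hi⟩ => h.2 n (Nat.lt_succ_self n) i hi⟩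
      · rintro ⟨h, h'⟩
        refine ⟨h.1, fun m hm i hi => ?_⟩
        rcases Nat.lt_succ_iff_lt_or_eq.1 hm with hm | rfl
        exacts [h.2 m hm i hi, h' ⟨i, hi⟩]
    rw [this]
    exact ih.inter ((G k u).closed n).isOpen_compl

theorem level_le (t : List ℕ) : (st G t).1 ≤ (st G t).2.1.length := by
  induction t with
  | nil => exact le_rfl
  | cons i t ih =>
    cases i with
    | zero => exact ih
    | succ i =>
      refine Nat.succ_le_succ (ih.trans ?_)
      exact ((G _ _).sub _).length_le

theorem avoid_of_mem {t : List ℕ} {x} (h : x ∈ Lst G (st G t)) : ∀ k < (st G t).1, x ∉ K k := by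
  induction t with
  | nil => exact fun k hk => absurd hk (Nat.not_lt_zero k)
  | cons i t ih =>
    have ih := ih (mem_Lst_son G h)
    cases i with
    | zero => exact ih
    | succ i =>
      intro k hk
      rcases Nat.lt_succ_iff_lt_or_eq.1 hk with hk | rfl
      · exact ih k hk
      · exact (G _ _).avoid ((mem_Lst_zero G).1 h)

theorem Lst_anti (p : ℕ → ℕ) {m n : ℕ} (h : m ≤ n) {x} (hx : x ∈ Lst G (st G (pre p n))) :
    x ∈ Lst G (st G (pre p m)) := by
  induction n, h using Nat.le_induction with
  | base => exact hx
  | succ n _ ih => exact ih (mem_Lst_son G hx)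

theorem st_spine {p : ℕ → ℕ} {M k u n} (hs : st G (pre p M) = (k, u, n))
    (h : ∀ m ≥ M, p m = 0) (j : ℕ) : st G (pre p (M + j)) = (k, u, n + j) := by
  induction j with
  | zero => exact hs
  | succ j ih =>
    rw [← add_assoc, pre_succ, h _ (by omega), st, ih]
    rfl

theorem eq_q {k u n x} (hxY : x ∈ Y) (h : ∀ j, x ∈ Lst G (k, u, n + j)) : x = (G k u).q := by
  rcases (G k u).cover hxY (h 0).1 with h1 | ⟨m, i, hi⟩
  · exact h1
  · exact absurd hi ((h (m + 1)).2 m (by simp only; omega) i)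

theorem level_unbounded {p : ℕ → ℕ} (h : ∀ M, ∃ m ≥ M, p m ≠ 0) (N : ℕ) :
    ∃ m, N ≤ (st G (pre p m)).1 ∧ (st G (pre p m)).2.2 = 0 := by
  induction N with
  | zero => exact ⟨0, Nat.zero_le _, rfl⟩
  | succ N ih =>
    obtain ⟨m, hm, -⟩ := ih
    have hmono : ∀ m' ≥ m, N ≤ (st G (pre p m')).1 := by
      intro m' h'
      induction m', h' using Nat.le_induction with
      | base => exact hm
      | succ m' _ ih =>
        refine ih.trans ?_
        rw [pre_succ, st]
        cases p m' with
        | zero => exact le_rfl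
        | succ i => exact Nat.le_succ _
    obtain ⟨m', h', h0⟩ := h m
    obtain ⟨i, hi⟩ := Nat.exists_eq_succ_of_ne_zero h0
    refine ⟨m' + 1, ?_, ?_⟩
    · rw [pre_succ, st, hi]
      exact Nat.succ_le_succ (hmono m' h')
    · rw [pre_succ, st, hi]
      rfl

/-- Every branch of the new tree determines exactly one point of `Y`. -/
theorem branch (hY : Y = (⋃ n, K n)ᶜ) (p : ℕ → ℕ) :
    ∃! y : Y, ∀ n, y.1 ∈ Lst G (st G (pre p n)) := by
  by_cases hp : ∃ M, ∀ m ≥ M, p m = 0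
  · obtain ⟨M, hM⟩ := hp
    obtain ⟨k, u, n, hs⟩ : ∃ k u n, st G (pre p M) = (k, u, n) := ⟨_, _, _, rfl⟩
    have hsp := st_spine G hs hM
    refine ⟨⟨(G k u).q, (G k u).q_mem⟩, fun m => ?_, fun y hy => Subtype.ext ?_⟩
    · refine Lst_anti G p (Nat.le_add_left m M) ?_
      rw [hsp]
      exact q_mem_Lst G _ _ _
    · refine eq_q G (n := n) y.2 fun j => ?_
      rw [← hsp]
      exact hy _
  · push Not at hp
    have hlev := level_unbounded G hp
    have hlen : ∀ N, ∃ m, N < (st G (pre p m)).2.1.length := fun N => by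
      obtain ⟨m, hm, -⟩ := hlev (N + 1)
      exact ⟨m, hm.trans (level_le G _)⟩
    have hagree : ∀ {x y m}, x ∈ Lst G (st G (pre p m)) → y ∈ Lst G (st G (pre p m)) →
        ∀ i < (st G (pre p m)).2.1.length, x i = y i := fun hx hy =>
      pre_eq_iff.1 ((mem_Cyl.1 hx.1).trans (mem_Cyl.1 hy.1).symm)
    -- The base cylinders shrink to a point `x`, read off coordinatewise from points `z m` of the
    -- leaves.
    let z : ℕ → ℕ → ℕ := fun m => (G (st G (pre p m)).1 (st G (pre p m)).2.1).q
    have hz : ∀ m, z m ∈ Lst G (st G (pre p m)) := fun m => q_mem_Lst G _ _ _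
    let x : ℕ → ℕ := fun i => z (Nat.find (hlen i)) i
    have hx1 : ∀ m, x ∈ Cyl (st G (pre p m)).2.1 := by
      intro m
      refine Eq.trans (pre_eq_iff.2 fun i hi => ?_) (mem_Cyl.1 (hz m).1)
      have hle : Nat.find (hlen i) ≤ m := Nat.find_min' _ hi
      exact hagree (hz _) (Lst_anti G p hle (hz m)) i (Nat.find_spec (hlen i))
    have hx : ∀ m, x ∈ Lst G (st G (pre p m)) := by
      intro m
      -- Right after an exit the leaf is a full cylinder, and it is contained in all earlier leaves.
      obtain ⟨m', h', h0⟩ := hp m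
      obtain ⟨i, hi⟩ := Nat.exists_eq_succ_of_ne_zero h0
      refine Lst_anti G p (n := m' + 1) (by omega) ?_
      have := hx1 (m' + 1)
      rw [pre_succ, st, hi] at this ⊢
      exact (mem_Lst_zero G).2 this
    have hxY : x ∈ Y := by
      rw [hY]
      simp only [mem_compl_iff, mem_iUnion, not_exists]
      intro k
      obtain ⟨m, hm, -⟩ := hlev (k + 1)
      exact avoid_of_mem G (hx m) k hm
    refine ⟨⟨x, hxY⟩, hx, fun y hy => Subtype.ext (funext fun i => ?_)⟩
    obtain ⟨m, hm⟩ := hlen i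
    exact hagree (hy m) (hx m) i hm

/-- If the prefix of `x` of length `l` is shorter than the base of the current state, or has already
been passed on the current spine, then some state containing `x` is the spine node at that prefix. -/
theorem handled {x} {t : List ℕ} (hx : x ∈ Lst G (st G t)) {l : ℕ}
    (hl : l < (st G t).2.1.length ∨
      ∃ m < (st G t).2.2, (G (st G t).1 (st G t).2.1).E m = pre x l) :
    ∃ t', x ∈ Lst G (st G t') ∧
      (G (st G t').1 (st G t').2.1).E (st G t').2.2 = pre x l := by
  induction t with
  | nil => simp [st] at hl
  | cons i t ih =>
    have hx' := mem_Lst_son G hx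
    have ih := ih hx'
    have key : (∃ m ≤ (st G t).2.2, (G (st G t).1 (st G t).2.1).E m = pre x l) →
        ∃ t', x ∈ Lst G (st G t') ∧
          (G (st G t').1 (st G t').2.1).E (st G t').2.2 = pre x l := by
      rintro ⟨m, hm, hE⟩
      rcases hm.lt_or_eq with hm | rfl
      · exact ih (Or.inr ⟨m, hm, hE⟩)
      · exact ⟨t, hx', hE⟩
    cases i with
    | zero =>
      rcases hl with hl | ⟨m, hm, hE⟩
      · exact ih (Or.inl hl)
      · exact key ⟨m, Nat.le_of_lt_succ hm, hE⟩
    | succ i =>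
      rcases hl with hl | ⟨m, hm, -⟩
      · rcases lt_or_ge l (st G t).2.1.length with h | h
        · exact ih (Or.inl h)
        · exact key ((G _ _).first ((mem_Lst_zero G).1 hx) l h (Nat.le_of_lt_succ hl))
      · exact absurd hm (Nat.not_lt_zero m)

end Machine

/-- The complement of a σ-compact subset of the Baire space has a continuous coding `d` whose fans
refine the standard ones: the fan at `pre y l` is refined by the fan of `d` at some `pre (d y) m`,
with son `i + 1` of the latter inside son `g i` of the former, for an injective `g`. -/
theorem exists_recoding {Y : Set (ℕ → ℕ)} {K : ℕ → Set (ℕ → ℕ)}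
    (G : ∀ k u, Comb Y (K k) u) (hY : Y = (⋃ n, K n)ᶜ) :
    ∃ d : Y ≃ (ℕ → ℕ), Continuous d ∧ ∀ (y : Y) (l : ℕ), ∃ (m : ℕ) (g : ℕ → ℕ),
      Function.Injective g ∧ ∀ (y' : Y) (i : ℕ), pre (d y') m = pre (d y) m → d y' m = i + 1 →
        pre y'.1 l = pre y.1 l ∧ y'.1 l = g i := by
  obtain ⟨d, hd⟩ := exists_coding (fun t => {y : Y | y.1 ∈ Lst G (st G t)})
    (by ext y; simp [st, Lst, Cyl])
    (fun t y => ⟨fun h => Lst_split G h, fun ⟨i, h⟩ => mem_Lst_son G h⟩)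
    (fun t i j y h h' => Lst_disj G h h') (branch G hY)
  refine ⟨d, continuous_of_open fun t => ?_, fun y l => ?_⟩
  · have : d ⁻¹' Cyl t = Subtype.val ⁻¹' Lst G (st G t) := by
      ext y; exact (hd y t).symm
    rw [this]
    exact (isOpen_Lst G _).preimage continuous_subtype_val
  · have hy : ∀ m, y.1 ∈ Lst G (st G (pre (d y) m)) := fun m =>
      (hd y _).2 (by simp [mem_Cyl])
    obtain ⟨t, ht, hE⟩ : ∃ t, y.1 ∈ Lst G (st G t) ∧
        (G (st G t).1 (st G t).2.1).E (st G t).2.2 = pre y.1 l := by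
      -- Either `y` is the point `q` of some comb, or its bases become arbitrarily long.
      by_cases hp : ∃ M, ∀ m ≥ M, d y m = 0
      · obtain ⟨M, hM⟩ := hp
        obtain ⟨k, u, n, hs⟩ : ∃ k u n, st G (pre (d y) M) = (k, u, n) := ⟨_, _, _, rfl⟩
        have hsp := st_spine G hs hM
        have hq : y.1 = (G k u).q := eq_q G (n := n) y.2 fun j => by
          rw [← hsp]; exact hy _
        rcases lt_or_ge l u.length with h | h
        · exact handled G (hy M) (Or.inl (by rw [hs]; exact h))
        · obtain ⟨m, hm⟩ := (G k u).first_q l h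
          refine handled G (hy (M + (m + 1))) (Or.inr ⟨m, ?_, ?_⟩)
          · rw [hsp]; simp only; omega
          · rw [hsp, hq]; exact hm
      · push Not at hp
        obtain ⟨m, hm, -⟩ := level_unbounded G hp (l + 1)
        exact handled G (hy m) (Or.inl (hm.trans (level_le G _)))
    have htd : pre (d y) t.length = t := (hd y t).1 ht
    refine ⟨t.length, (G (st G t).1 (st G t).2.1).g (st G t).2.2, (G _ _).g_inj _,
      fun y' i h h' => ?_⟩
    have h1 : d y' ∈ Cyl ((i + 1) :: t) := mem_Cyl_cons.2 ⟨h', h.trans htd⟩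
    have h2 := (mem_Lst_zero G).1 ((hd y' _).2 h1)
    rw [hE, mem_Cyl_cons, length_pre, mem_Cyl_pre] at h2
    exact ⟨h2.2, h2.1⟩

theorem HasCoding.compl {X : Type*} [TopologicalSpace X] (hX : HasCoding X) {K : ℕ → Set X}
    (hK : ∀ n, IsCompact (K n)) : HasCoding {x : X // x ∉ ⋃ n, K n} := by
  obtain ⟨c, hc, hgrow⟩ := hX
  have hK' : ∀ n, IsCompact (c '' K n) := fun n => (hK n).image hc
  have hcomb : ∀ k u, Nonempty (Comb (⋃ n, c '' K n)ᶜ (c '' K k) u) := fun k u => by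
    obtain ⟨q, hq, hqu⟩ := exists_mem_compl hK' u
    exact exists_comb (hK' k) (fun x hx h => hx (mem_iUnion.2 ⟨k, h⟩)) hq hqu
  obtain ⟨d, hd, hdg⟩ := exists_recoding (fun k u => (hcomb k u).some) rfl
  let e : {x : X // x ∉ ⋃ n, K n} ≃ ((⋃ n, c '' K n)ᶜ : Set (ℕ → ℕ)) :=
    c.subtypeEquiv fun x => by simp
  have he : Continuous e := Continuous.subtype_mk (hc.comp continuous_subtype_val) _
  refine ⟨e.trans d, hd.comp he, fun x U hU => ?_⟩
  obtain ⟨V, hV, hVU⟩ := mem_nhds_subtype _ _ _ |>.1 hU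
  obtain ⟨l, hl⟩ := hgrow x.1 V hV
  obtain ⟨m, g, hg, h⟩ := hdg (e x) l
  refine ⟨m, ?_⟩
  have h1 : ∀ᶠ i in cofinite, ∀ y, pre (c y) l = pre (c x) l → c y l = g i → y ∈ V :=
    hg.tendsto_cofinite.eventually hl
  have h2 : ∀ᶠ k in cofinite, k ≠ 0 ∧
      ∀ y, pre (c y) l = pre (c x) l → c y l = g (k - 1) → y ∈ V := by
    rw [Nat.cofinite_eq_atTop] at h1 ⊢
    exact (eventually_ne_atTop 0).and ((tendsto_sub_atTop_nat 1).eventually h1)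
  filter_upwards [h2] with k hk y hy hyk
  obtain ⟨a, b⟩ := h (e y) (k - 1) hy (by
    have : d (e y) m = k := hyk
    omega)
  exact hVU (hk.2 y.1 a b)

/-! ### π-trees and codings -/

/-- The tree of reversed finite sequences under proper extension. -/
def sufTree : STree (List ℕ) where
  nodes := univ
  lt s t := s <:+ t ∧ s ≠ t
  lt_mem_left _ := mem_univ _
  lt_mem_right _ := mem_univ _
  lt_irrefl _ h := h.2 rfl
  lt_trans h h' := ⟨h.1.trans h'.1, fun e => by
    subst e
    exact h.2 (h.1.eq_of_length_le h'.1.length_le)⟩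
  pred_linear {x v w} h h' := by
    by_cases e : v = w
    · exact Or.inr (Or.inl e)
    · rcases List.suffix_or_suffix_of_suffix h.1 h'.1 with h | h
      · exact Or.inl ⟨h, e⟩
      · exact Or.inr (Or.inr ⟨h, Ne.symm e⟩)
  pred_wf A _ hne := by
    obtain ⟨m, hm, hmin⟩ := (InvImage.wf List.length Nat.lt_wfRel.wf).has_min A hne
    exact ⟨m, hm, fun a ha h => hmin a ha
      (lt_of_le_of_ne h.1.length_le fun e => h.2 (h.1.eq_of_length e))⟩

theorem sufTree_le {s t : List ℕ} : sufTree.le s t ↔ s <:+ t := by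
  constructor
  · rintro (h | ⟨rfl, -⟩)
    exacts [h.1, List.suffix_refl _]
  · intro h
    by_cases e : s = t
    · exact Or.inr ⟨e, mem_univ _⟩
    · exact Or.inl ⟨h, e⟩

theorem sufTree_isSon {s t : List ℕ} : sufTree.IsSon s t ↔ ∃ k, t = k :: s := by
  constructor
  · rintro ⟨⟨h, hne⟩, hno⟩
    cases t with
    | nil => exact absurd (List.suffix_nil.1 h) hne
    | cons k t =>
      rcases List.suffix_cons_iff.1 h with h | h
      · exact absurd h hne
      · by_cases e : s = t
        · exact ⟨k, by rw [e]⟩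
        · exact absurd ⟨t, ⟨h, e⟩, List.suffix_cons _ _, by simp⟩ hno
  · rintro ⟨k, rfl⟩
    refine ⟨⟨List.suffix_cons _ _, by simp⟩, ?_⟩
    rintro ⟨v, ⟨h1, h1'⟩, h2, h2'⟩
    rcases List.suffix_cons_iff.1 h2 with h | h
    · exact h2' h
    · exact h1' (h1.eq_of_length_le h.length_le)

theorem sufTree_branch {B : Set (List ℕ)} (hB : sufTree.IsBranch B) :
    ∃ p, B = range (pre p) := by
  obtain ⟨⟨-, hch⟩, hmax⟩ := hB
  simp only [sufTree_le] at hch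
  -- By maximality, `B` contains every node comparable with all of its members.
  have hadd : ∀ s, (∀ t ∈ B, s <:+ t ∨ t <:+ s) → s ∈ B := by
    intro s hs
    have : B = insert s B := by
      refine hmax _ ⟨subset_univ _, ?_⟩ (subset_insert _ _)
      simp only [sufTree_le]
      rintro x (rfl | hx) y (rfl | hy)
      · exact Or.inl (List.suffix_refl _)
      · exact hs y hy
      · exact (hs x hx).symm
      · exact hch x hx y hy
    rw [this]
    exact mem_insert _ _
  have hdown : ∀ s t, t ∈ B → s <:+ t → s ∈ B := by
    intro s t ht hst
    refine hadd s fun r hr => ?_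
    rcases hch t ht r hr with h | h
    · exact Or.inl (hst.trans h)
    · exact List.suffix_or_suffix_of_suffix hst h
  have hnext : ∀ t : {t // t ∈ B}, ∃ j, j :: t.1 ∈ B := by
    rintro ⟨t, ht⟩
    by_contra! hno
    refine hno 0 (hadd _ fun s hs => ?_)
    rcases hch t ht s hs with h | h
    · obtain ⟨r, rfl⟩ := h
      rcases List.eq_nil_or_concat r with rfl | ⟨r, j, rfl⟩
      · exact Or.inr (List.suffix_cons _ _)
      · exact absurd (hdown _ _ hs (by simp)) (hno j)
    · exact Or.inr (h.trans (List.suffix_cons _ _))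
  choose nx hnx using hnext
  have hnil : [] ∈ B := hadd [] fun t _ => Or.inl (List.nil_suffix)
  let s : ℕ → {t // t ∈ B} := fun n =>
    Nat.rec ⟨[], hnil⟩ (fun _ t => ⟨nx t :: t.1, hnx t⟩) n
  have hs : ∀ n, pre (fun n => nx (s n)) n = (s n).1 := by
    intro n
    induction n with
    | zero => rfl
    | succ n ih => rw [pre_succ, ih]
  refine ⟨fun n => nx (s n), ?_⟩
  refine hmax _ ⟨subset_univ _, ?_⟩ ?_
  · rintro _ ⟨m, rfl⟩ _ ⟨n, rfl⟩
    simp only [sufTree_le]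
    exact (le_total m n).imp (pre_suffix _) (pre_suffix _)
  · intro t ht
    refine ⟨t.length, ?_⟩
    have h1 : pre (fun n => nx (s n)) t.length ∈ B := by rw [hs]; exact (s _).2
    rcases hch _ h1 t ht with h | h
    · exact h.eq_of_length (by simp)
    · exact (h.eq_of_length (by simp)).symm

theorem hasPiTree_of_coding {X : Type*} [TopologicalSpace X] (hX : HasCoding X) : HasPiTree X := by
  obtain ⟨c, hc, hgrow⟩ := hX
  refine ⟨List ℕ, sufTree, fun t => c ⁻¹' Cyl t, ⟨List.reverse, ?_, ?_⟩, ?_, ?_, ?_, ?_, ?_⟩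
  · exact (List.reverse_involutive.bijective).bijOn_univ
  · intro s _ t _
    simp [sufTree, STree.listLt]
  · exact fun t _ => (isClopen_Cyl t).2.preimage hc
  · intro t _ _
    constructor
    · ext x
      simp only [mem_preimage, STree.sons, mem_iUnion, mem_ofPred_eq, sufTree_isSon]
      constructor
      · exact fun h => ⟨_, ⟨c x t.length, rfl⟩, mem_Cyl_cons.2 ⟨rfl, h⟩⟩
      · rintro ⟨_, ⟨k, rfl⟩, h⟩
        exact (mem_Cyl_cons.1 h).2
    · intro s hs s' hs' hne
      obtain ⟨k, rfl⟩ := sufTree_isSon.1 hs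
      obtain ⟨k', rfl⟩ := sufTree_isSon.1 hs'
      refine eq_empty_of_forall_notMem fun x hx => hne ?_
      rw [← (mem_Cyl_cons.1 hx.1).1, ← (mem_Cyl_cons.1 hx.2).1]
  · refine ⟨⟨[], mem_univ _⟩, fun B hB => ?_⟩
    obtain ⟨p, rfl⟩ := sufTree_branch hB
    refine ⟨c.symm p, ?_⟩
    ext x
    simp only [STree.fruit, mem_range, iInter_exists, iInter_iInter_eq', mem_iInter, mem_preimage,
      mem_Cyl_pre, mem_singleton_iff, Equiv.eq_symm_apply]
    constructor
    · intro h
      ext n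
      exact pre_eq_iff.1 (h (n + 1)) n (Nat.lt_succ_self n)
    · rintro h n
      rw [h]
  · refine ⟨[], ⟨mem_univ _, fun t _ => sufTree_le.2 List.nil_suffix⟩, ?_⟩
    ext x; simp [Cyl]
  · intro x _ U _ hU
    rw [nhdsWithin_univ] at hU
    obtain ⟨n, hn⟩ := hgrow x U hU
    refine ⟨pre (c x) n, ⟨mem_univ _, by simp [mem_Cyl]⟩, ?_⟩
    rintro D rfl -
    set A : Set ℕ := {k | ∀ y, pre (c y) n = pre (c x) n → c y n = k → y ∈ D} with hA
    have hAfin : Aᶜ.Finite := hn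
    refine ⟨_, ⟨(fun k => k :: pre (c x) n) '' A, ?_, ?_, rfl⟩, ?_, ?_⟩
    · rintro _ ⟨k, -, rfl⟩
      exact sufTree_isSon.2 ⟨k, rfl⟩
    · refine (hAfin.image fun k => k :: pre (c x) n).subset ?_
      rintro s ⟨hs, hsA⟩
      obtain ⟨k, rfl⟩ := sufTree_isSon.1 hs
      exact ⟨k, fun hk => hsA ⟨k, hk, rfl⟩, rfl⟩
    · obtain ⟨k, hk⟩ : A.Nonempty := by
        simpa using hAfin.infinite_compl.nonempty
      obtain ⟨p, hp⟩ := exists_cyl (k :: pre (c x) n)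
      refine Nonempty.ne_empty ⟨c.symm p, mem_iUnion₂.2 ⟨_, ⟨k, hk, rfl⟩, ?_⟩⟩
      simpa using hp
    · intro y hy
      obtain ⟨_, ⟨k, hk, rfl⟩, h⟩ := mem_iUnion₂.1 hy
      have h := mem_Cyl_cons.1 h
      rw [length_pre, mem_Cyl_pre] at h
      exact hk y h.2 h.1

theorem coding_of_hasPiTree {X : Type*} [TopologicalSpace X] (hX : HasPiTree X) : HasCoding X := by
  obtain ⟨ι, T, leaf, ⟨f, hf, hlt⟩, hopen, hstrict, ⟨-, hbr⟩, ⟨r, hr, hrl⟩, hgrow⟩ := hX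
  have hex : ∀ t : List ℕ, ∃ z ∈ T.nodes, f z = t.reverse := fun t => hf.surjOn (mem_univ _)
  -- `g` is the inverse of the isomorphism `f`, precomposed with reversal.
  choose g hg hfg using hex
  have hgf : ∀ z ∈ T.nodes, g (f z).reverse = z := fun z hz =>
    hf.injOn (hg _) hz (by rw [hfg, List.reverse_reverse])
  have hginj : Function.Injective g := fun s t h => by
    have := hfg s
    rw [h, hfg] at this
    exact (List.reverse_injective this).symm
  have hglt : ∀ s t, T.lt (g s) (g t) ↔ sufTree.lt s t := fun s t => by
    rw [hlt _ (hg s) _ (hg t), hfg, hfg]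
    simp [sufTree, STree.listLt]
  have hgle : ∀ s t, T.le (g s) (g t) ↔ s <:+ t := fun s t => by
    rw [← sufTree_le, STree.le, STree.le, hglt, hginj.eq_iff]
    simp [hg, sufTree]
  have hsurj : ∀ z ∈ T.nodes, ∃ t, g t = z := fun z hz => ⟨_, hgf z hz⟩
  have hson : ∀ s z, z ∈ T.sons (g s) ↔ ∃ k, z = g (k :: s) := by
    intro s z
    have aux : ∀ t, T.IsSon (g s) (g t) ↔ ∃ k, t = k :: s := fun t => by
      rw [← sufTree_isSon, STree.IsSon, STree.IsSon, hglt]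
      refine and_congr_right fun _ => not_congr ⟨?_, ?_⟩
      · rintro ⟨v, h, h'⟩
        obtain ⟨w, rfl⟩ := hsurj v (T.lt_mem_left h')
        exact ⟨w, (hglt _ _).1 h, (hglt _ _).1 h'⟩
      · rintro ⟨w, h, h'⟩
        exact ⟨g w, (hglt _ _).2 h, (hglt _ _).2 h'⟩
    constructor
    · intro h
      obtain ⟨t, rfl⟩ := hsurj z (T.lt_mem_right h.1)
      obtain ⟨k, rfl⟩ := (aux t).1 h
      exact ⟨k, rfl⟩
    · rintro ⟨k, rfl⟩
      exact (aux _).2 ⟨k, rfl⟩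
  have hnomax : ∀ t, ¬ T.IsMax (g t) := fun t h =>
    h.2 (g (0 :: t)) ((hglt _ _).2 ⟨List.suffix_cons _ _, by simp⟩)
  have hroot : g [] = r := by
    obtain ⟨t, rfl⟩ := hsurj r hr.1
    rw [List.suffix_nil.1 ((hgle _ _).1 (hr.2 _ (hg [])))]
  obtain ⟨c, hc⟩ := exists_coding (fun t => leaf (g t)) (by rw [hroot, hrl])
    (fun t x => by
      rw [(hstrict _ (hg t) (hnomax t)).1]
      simp [hson])
    (fun t i j x hi hj => by
      by_contra hne
      have := (hstrict _ (hg t) (hnomax t)).2 _ ((hson _ _).2 ⟨i, rfl⟩) _ ((hson _ _).2 ⟨j, rfl⟩)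
        (fun h => hne (List.cons.inj (hginj h)).1)
      exact this.le ⟨hi, hj⟩)
    (fun p => by
      have hB : T.IsBranch (range fun n => g (pre p n)) := by
        refine ⟨⟨?_, ?_⟩, fun C hC hBC => hBC.antisymm fun z hz => ?_⟩
        · rintro _ ⟨n, rfl⟩
          exact hg _
        · rintro _ ⟨m, rfl⟩ _ ⟨n, rfl⟩
          simp only [hgle]
          exact (le_total m n).imp (pre_suffix _) (pre_suffix _)
        · obtain ⟨t, rfl⟩ := hsurj z (hC.1 hz)
          refine ⟨t.length, ?_⟩
          have := hC.2 _ (hBC ⟨t.length, rfl⟩) _ hz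
          simp only [hgle] at this
          rcases this with h | h
          · simp only [h.eq_of_length (by simp)]
          · simp only [← h.eq_of_length (by simp)]
      obtain ⟨x, hx⟩ := hbr _ hB
      have hx' : ∀ y, (∀ n, y ∈ leaf (g (pre p n))) ↔ y = x := fun y => by
        rw [← mem_singleton_iff, ← hx]
        simp [STree.fruit]
      exact ⟨x, (hx' x).2 rfl, fun y hy => (hx' y).1 hy⟩)
  refine ⟨c, continuous_of_open fun t => ?_, fun x U hU => ?_⟩
  · have : c ⁻¹' Cyl t = leaf (g t) := by ext x; exact (hc x t).symm
    rw [this]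
    exact hopen _ (hg t)
  · obtain ⟨z, ⟨hz, hxz⟩, hpi⟩ := hgrow x (mem_univ x) U (subset_univ _)
      (by rwa [nhdsWithin_univ])
    obtain ⟨t, rfl⟩ := hsurj z hz
    have ht : pre (c x) t.length = t := (hc x t).1 hxz
    obtain ⟨_, ⟨C, hC, hCfin, rfl⟩, -, hCU⟩ := hpi U rfl
      (Nonempty.ne_empty ⟨x, mem_of_mem_nhds hU⟩)
    refine ⟨t.length, ?_⟩
    have hfin : ∀ᶠ k in cofinite, g (k :: t) ∈ C := by
      have : {k | g (k :: t) ∈ T.sons (g t) \ C}.Finite :=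
        hCfin.preimage (fun a _ b _ h => (List.cons.inj (hginj h)).1)
      refine this.subset fun k hk => ⟨(hson _ _).2 ⟨k, rfl⟩, hk⟩
    filter_upwards [hfin] with k hk y hy hyk
    refine hCU (mem_iUnion₂.2 ⟨_, hk, (hc y _).2 (mem_Cyl_cons.2 ⟨hyk, hy.trans ht⟩)⟩)

end PiTree

/-- Removing a σ-compact subset from a space with a π-tree yields a
space with a π-tree; in particular removing a countable subset does. -/
theorem hasPiTree_compl_sigmaCompact {X : Type v} [TopologicalSpace X]
    (hX : HasPiTree X) :
    (∀ F : Set X, (∃ K : ℕ → Set X, (∀ n, IsCompact (K n)) ∧ F = ⋃ n, K n) →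
      HasPiTree {x : X // x ∉ F}) ∧
    (∀ C : Set X, C.Countable → HasPiTree {x : X // x ∉ C}) := by
  have main : ∀ F : Set X, (∃ K : ℕ → Set X, (∀ n, IsCompact (K n)) ∧ F = ⋃ n, K n) →
      HasPiTree {x : X // x ∉ F} := by
    rintro F ⟨K, hK, rfl⟩
    exact PiTree.hasPiTree_of_coding ((PiTree.coding_of_hasPiTree hX).compl hK)
  refine ⟨main, fun C hC => main C ?_⟩
  rcases C.eq_empty_or_nonempty with rfl | hne
  · exact ⟨fun _ => ∅, fun _ => isCompact_empty, by simp⟩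
  · obtain ⟨f, rfl⟩ := hC.exists_eq_range hne
    exact ⟨fun n => {f n}, fun n => isCompact_singleton, by simp⟩
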